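/- arXiv:2111.02837 — 2 statements merged into one kernel-verified Lean document; each statement's English description precedes it below -/
import Mathlib

section
/- Let g and h be bijections of the Grassmannians of m-dimensional and l-dimensional subspaces of a finite-dimensional complex vector space V with 0 < m < l < dim V, such that X ⊆ Y if and only if g(X) ⊆ h(Y) for all X of dimension m and Y of dimension l. Then there exists a semilinear automorphism S of V inducing both g and h, i.e., g(X) = S(X) and h(Y) = S(Y) for all such X, Y. -/
/-!
The map `h` on `l`-dimensional subspaces determines everything: match a subspace `X` of `V` with a
subspace `X'` of `W` if `h` carries the `l`-dimensional subspaces through `X` exactly to those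
through `X'`. By hypothesis `g` provides such a matching in dimension `m`. A matching in dimension
`k + 1` respects adjacency, so it descends to dimension `k`: write `Z` as the intersection of two
adjacent `(k + 1)`-dimensional subspaces and match it with the intersection of their partners. In
dimension `1` one obtains a collineation, which is semilinear by the fundamental theorem of
projective geometry: normalize the representing vectors so that `φ (e + u) = φ e + φ u` for `u` in a
hyperplane not containing `e`; then `φ` is additive on that hyperplane, hence semilinear.
-/

open Module Submodule Function

section Adjacent

variable {α : Type*} [Lattice α] {a b c d : α}

/-- Two elements of a lattice are adjacent if their join covers both of them. For subspaces of
equal finite dimension `k` this says that their intersection has dimension `k - 1`. -/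
def Adjacent (a b : α) : Prop := a ⋖ a ⊔ b ∧ b ⋖ a ⊔ b

theorem Adjacent.symm (h : Adjacent a b) : Adjacent b a :=
  ⟨sup_comm a b ▸ h.2, sup_comm a b ▸ h.1⟩

theorem Adjacent.inf_covBy_left [IsWeakLowerModularLattice α] (h : Adjacent a b) : a ⊓ b ⋖ a :=
  inf_covBy_of_covBy_sup_of_covBy_sup_left h.1 h.2

theorem Adjacent.inf_le_of_not_le_sup [IsWeakLowerModularLattice α] (hab : Adjacent a b)
    (hac : Adjacent a c) (hbc : Adjacent b c) (hc : ¬ c ≤ a ⊔ b) : a ⊓ b ≤ c := by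
  have eq_inf {d : α} (hd : d ≤ a ⊔ b) (hdc : Adjacent d c) : c ⊓ (a ⊔ b) = c ⊓ d :=
    (hdc.symm.inf_covBy_left.wcovBy.eq_or_eq (inf_le_inf_left c hd) inf_le_left).resolve_right
      (mt inf_eq_left.mp hc)
  have hle : a ⊓ c ≤ a ⊓ b := le_inf inf_le_left <| by
    rw [inf_comm, ← eq_inf le_sup_left hac, eq_inf le_sup_right hbc]
    exact inf_le_right
  have heq : a ⊓ b = a ⊓ c :=
    (hac.inf_covBy_left.wcovBy.eq_or_eq hle inf_le_left).resolve_right hab.inf_covBy_left.ne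
  exact heq.trans_le inf_le_right

theorem adjacent_of_covBy_of_covBy [IsWeakUpperModularLattice α] (ha : d ⋖ a) (hb : d ⋖ b)
    (hne : a ≠ b) : Adjacent a b := by
  have hinf : a ⊓ b = d := ha.wcovBy.inf_eq hb.wcovBy hne
  rw [← hinf] at ha hb
  exact ⟨ha.sup_of_inf_of_inf_left hb, ha.sup_of_inf_of_inf_right hb⟩

end Adjacent

section Subspaces

variable {K V : Type*} [DivisionRing K] [AddCommGroup V] [Module K V] {X Y W : Submodule K V}
  {x y z : V}

theorem covBy_sup_span_singleton (hx : x ∉ X) : X ⋖ X ⊔ K ∙ x :=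
  sup_comm X (K ∙ x) ▸ covBy_span_singleton_sup hx

theorem finrank_eq_succ_of_covBy [FiniteDimensional K X] (h : X ⋖ Y) :
    finrank K Y = finrank K X + 1 := by
  obtain ⟨y, hyY, hyX⟩ := SetLike.exists_of_lt h.lt
  obtain rfl : X ⊔ K ∙ y = Y := ((h.wcovBy.eq_or_eq le_sup_left
    (sup_le h.le (by simpa using hyY))).resolve_left (covBy_sup_span_singleton hyX).ne')
  have hdisj : X ⊓ K ∙ y = ⊥ := (disjoint_span_singleton_of_notMem hyX).eq_bot
  have hsum := finrank_sup_add_finrank_inf_eq X (K ∙ y)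
  have hy0 : y ≠ 0 := (ne_of_mem_of_not_mem X.zero_mem hyX).symm
  rwa [hdisj, finrank_bot, finrank_span_singleton hy0] at hsum

theorem exists_notMem_of_finrank_lt_rank [FiniteDimensional K X]
    (h : (finrank K X : Cardinal) < Module.rank K V) : ∃ x, x ∉ X := by
  by_contra! hX
  rw [finrank_eq_rank, eq_top_iff'.mpr hX, rank_top] at h
  exact h.false

theorem rank_span_pair_le (x y : V) : Module.rank K (span K {x, y}) ≤ 2 :=
  (rank_span_le _).trans <| Cardinal.mk_insert_le.trans <| by simp [one_add_one_eq_two]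

theorem exists_notMem_span_pair (h : 2 < Module.rank K V) (x y : V) :
    ∃ z, z ∉ span K {x, y} := by
  by_contra! hz
  have hle := rank_span_pair_le (K := K) x y
  rw [eq_top_iff'.mpr hz, rank_top] at hle
  exact h.not_ge hle

theorem exists_le_finrank_eq [FiniteDimensional K X] {l : ℕ} (hX : finrank K X ≤ l)
    (hl : l ≤ Module.rank K V) : ∃ Y, X ≤ Y ∧ FiniteDimensional K Y ∧ finrank K Y = l := by
  induction l, hX using Nat.le_induction with
  | base => exact ⟨X, le_rfl, ‹_›, rfl⟩
  | succ l _ ih =>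
    have hlt : (l : Cardinal) < Module.rank K V := lt_of_lt_of_le (by simp) hl
    obtain ⟨Y, hXY, _, rfl⟩ := ih hlt.le
    obtain ⟨y, hy⟩ := exists_notMem_of_finrank_lt_rank hlt
    exact ⟨Y ⊔ K ∙ y, hXY.trans le_sup_left, inferInstance,
      finrank_eq_succ_of_covBy (covBy_sup_span_singleton hy)⟩

-- `X'` is the image of `X` under `x ↦ x + f x • y`, for a functional `f` with `f z = 1` and
-- `f = 0` on `W`; this map is injective on `X` because `y ∉ X`.
theorem exists_finrank_eq_notMem (hWX : W ≤ X) (hzX : z ∈ X) (hzW : z ∉ W) (hy : y ∉ X) :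
    ∃ X' : Submodule K V, finrank K X' = finrank K X ∧ W ≤ X' ∧ X' ≤ X ⊔ K ∙ y ∧ z ∉ X' := by
  obtain ⟨f, hf, hfz⟩ := LinearMap.exists_extend_of_notMem (0 : W →ₗ[K] K) hzW 1
  have hfW (w : V) (hw : w ∈ W) : f w = 0 := congr($hf ⟨w, hw⟩)
  let τ : X →ₗ[K] V := X.subtype + (f ∘ₗ X.subtype).smulRight y
  have hτ (x : X) : τ x = x + f x • y := rfl
  have eq_of_τ_eq {x : X} {v : V} (hv : v ∈ X) (hx : τ x = v) : (x : V) = v := by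
    have hmem : f x • y ∈ X := by
      rw [eq_sub_of_add_eq' ((hτ x).symm.trans hx)]
      exact sub_mem hv x.2
    have hfx : f x = 0 := by_contra fun h => hy ((smul_mem_iff X h).mp hmem)
    simpa [hτ, hfx] using hx
  have hinj : Injective τ := (injective_iff_map_eq_zero τ).mpr fun x hx =>
    Subtype.ext (eq_of_τ_eq X.zero_mem hx)
  refine ⟨τ.range, LinearMap.finrank_range_of_inj hinj, fun w hw => ⟨⟨w, hWX hw⟩, ?_⟩, ?_, ?_⟩
  · simp [hτ, hfW w hw]
  · rintro _ ⟨x, rfl⟩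
    exact add_mem (mem_sup_left x.2) (mem_sup_right (smul_mem _ _ (mem_span_singleton_self y)))
  · rintro ⟨x, hx⟩
    have hy0 : y = 0 := by simpa [hτ, eq_of_τ_eq hzX hx, hfz] using hx
    exact hy (hy0 ▸ X.zero_mem)

end Subspaces

/-- The Grassmannian of `k`-dimensional subspaces. For `k = 0` it also contains the
infinite-dimensional subspaces, whose `finrank` is `0`. -/
abbrev Gr (K V : Type*) [DivisionRing K] [AddCommGroup V] [Module K V] (k : ℕ) :=
  {X : Submodule K V // finrank K X = k}

section Grassmannian

variable {K L V W : Type*} [DivisionRing K] [AddCommGroup V] [Module K V] [DivisionRing L]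
  [AddCommGroup W] [Module L W] {X X₁ X₂ : Submodule K V} {X' X₁' X₂' : Submodule L W} {z : V}
  {k l : ℕ} {h : Gr K V l ≃ Gr L W l}

theorem Gr.finiteDimensional (hk : 0 < k) (X : Gr K V k) : FiniteDimensional K X.1 :=
  .of_finrank_pos (X.2.symm ▸ hk)

theorem Gr.le_iff_eq (hk : 0 < k) {X Y : Gr K V k} : X.1 ≤ Y.1 ↔ X = Y := by
  have := Y.finiteDimensional hk
  refine ⟨fun hle => Subtype.ext (eq_of_le_of_finrank_eq hle (X.2.trans Y.2.symm)), ?_⟩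
  rintro rfl
  exact le_rfl

theorem Gr.exists_eq_span_singleton (X : Gr K V 1) : ∃ x, X.1 = K ∙ x := by
  have := X.finiteDimensional one_pos
  obtain ⟨x, hxX, hx⟩ := X.1.exists_mem_ne_zero_of_ne_bot (one_le_finrank_iff.mp X.2.ge)
  exact ⟨x, eq_span_singleton_of_mem_of_finrank_eq_one X.2 hxX hx⟩

theorem Gr.exists_le_notMem (hl0 : 0 < l) (hl : l < Module.rank K V) {Y : Gr K V l}
    (hXY : X ≤ Y.1) (hz : z ∉ X) : ∃ Y' : Gr K V l, X ≤ Y'.1 ∧ z ∉ Y'.1 := by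
  by_cases hzY : z ∈ Y.1
  · have := Y.finiteDimensional hl0
    obtain ⟨y, hy⟩ := exists_notMem_of_finrank_lt_rank (Y.2.symm ▸ hl)
    obtain ⟨Y', hY', hXY', -, hzY'⟩ := exists_finrank_eq_notMem hXY hzY hz hy
    exact ⟨⟨Y', hY'.trans Y.2⟩, hXY', hzY'⟩
  · exact ⟨Y, hXY, hzY⟩

theorem Gr.exists_le_of_covBy (hk : 0 < k) (hkl : k < l) (hl : l ≤ Module.rank K V)
    {X : Gr K V k} {Z : Submodule K V} (hXZ : X.1 ⋖ Z) : ∃ Y : Gr K V l, Z ≤ Y.1 := by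
  have := X.finiteDimensional hk
  have hZ : finrank K Z = k + 1 := by rw [finrank_eq_succ_of_covBy hXZ, X.2]
  have : FiniteDimensional K Z := .of_finrank_pos (hZ ▸ k.succ_pos)
  obtain ⟨Y, hZY, -, hY⟩ := exists_le_finrank_eq (hZ.trans_le hkl) hl
  exact ⟨⟨Y, hY⟩, hZY⟩

/-- A bijection `h` between Grassmannians matches `X` with `X'` if it carries the `l`-dimensional
subspaces containing `X` exactly to those containing `X'`. -/
def Corresponds (h : Gr K V l ≃ Gr L W l) (X : Submodule K V) (X' : Submodule L W) : Prop :=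
  ∀ Y : Gr K V l, X ≤ Y.1 ↔ X' ≤ (h Y).1

theorem corresponds_apply (hl0 : 0 < l) (h : Gr K V l ≃ Gr L W l) (Y : Gr K V l) :
    Corresponds h Y.1 (h Y).1 := fun Y₁ => by
  rw [Gr.le_iff_eq hl0, Gr.le_iff_eq hl0, h.apply_eq_iff_eq]

theorem Corresponds.symm (hX : Corresponds h X X') : Corresponds h.symm X' X := fun Y => by
  simpa using (hX (h.symm Y)).symm

theorem Corresponds.sup (h₁ : Corresponds h X₁ X₁') (h₂ : Corresponds h X₂ X₂') :
    Corresponds h (X₁ ⊔ X₂) (X₁' ⊔ X₂') := fun Y => by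
  rw [sup_le_iff, sup_le_iff, h₁ Y, h₂ Y]

theorem Corresponds.mono (hl0 : 0 < l) (hW : l < Module.rank L W) (h₁ : Corresponds h X₁ X₁')
    (h₂ : Corresponds h X₂ X₂') {Y : Gr K V l} (hY : X₂ ≤ Y.1) (hle : X₁ ≤ X₂) : X₁' ≤ X₂' := by
  intro z hz₁
  by_contra hz₂
  obtain ⟨Y', hY', hzY'⟩ := Gr.exists_le_notMem hl0 hW ((h₂ Y).mp hY) hz₂
  exact hzY' (h₁.symm Y' |>.mpr (hle.trans (h₂.symm Y' |>.mp hY')) hz₁)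

theorem Corresponds.le_iff (hl0 : 0 < l) (hV : l < Module.rank K V) (hW : l < Module.rank L W)
    (h₁ : Corresponds h X₁ X₁') (h₂ : Corresponds h X₂ X₂') {Y : Gr K V l} (hY : X₂ ≤ Y.1) :
    X₁ ≤ X₂ ↔ X₁' ≤ X₂' :=
  ⟨h₁.mono hl0 hW h₂ hY, h₁.symm.mono hl0 hV h₂.symm ((h₂ Y).mp hY)⟩

/-- A bijection `h` between Grassmannians of `l`-dimensional subspaces also induces a
correspondence between `k`-dimensional subspaces: each of them, on either side, has a match. -/
def InducesOnGr (h : Gr K V l ≃ Gr L W l) (k : ℕ) : Prop :=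
  Relator.BiTotal fun (X : Gr K V k) (X' : Gr L W k) => Corresponds h X.1 X'.1

theorem InducesOnGr.symm (hk : InducesOnGr h k) : InducesOnGr h.symm k :=
  ⟨fun X' => (hk.2 X').imp fun _ => .symm, fun X => (hk.1 X).imp fun _ => .symm⟩

theorem InducesOnGr.covBy_sup (hk : InducesOnGr h k) (hk0 : 0 < k) (hkl : k < l)
    (hV : l < Module.rank K V) (hW : l < Module.rank L W) {X₁ : Gr K V k} {X₁' : Gr L W k}
    (h₁ : Corresponds h X₁.1 X₁'.1) (h₂ : Corresponds h X₂ X₂') (hcov : X₁.1 ⋖ X₁.1 ⊔ X₂) :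
    X₁'.1 ⋖ X₁'.1 ⊔ X₂' := by
  have hl0 := hk0.trans hkl
  obtain ⟨Y, hY⟩ := Gr.exists_le_of_covBy hk0 hkl hV.le hcov
  refine ⟨le_sup_left.lt_of_not_ge fun hle => hcov.lt.not_ge ?_, fun C hlt hCsup => ?_⟩
  · exact ((h₁.sup h₂).le_iff hl0 hV hW h₁ (le_sup_left.trans hY)).mpr hle
  have := X₁'.finiteDimensional hk0
  obtain ⟨z, hz, hz0⟩ := X₁'.1.exists_mem_ne_zero_of_ne_bot
    (one_le_finrank_iff.mp (X₁'.2.symm ▸ hk0))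
  obtain ⟨y, hyC, hy⟩ := SetLike.exists_of_lt hlt
  obtain ⟨Z', hZ', -, hZ'le, hzZ'⟩ :=
    exists_finrank_eq_notMem bot_le hz (by simpa using hz0) hy
  have hZ'C : Z' ≤ C := hZ'le.trans (sup_le hlt.le (by simpa using hyC))
  have hZ'X₁' : ¬ Z' ≤ X₁'.1 := fun hle => hzZ' (eq_of_le_of_finrank_eq hle hZ' ▸ hz)
  obtain ⟨Z, hZ⟩ := hk.2 ⟨Z', hZ'.trans X₁'.2⟩
  have hZsup : Z.1 ≤ X₁.1 ⊔ X₂ :=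
    (hZ.le_iff hl0 hV hW (h₁.sup h₂) hY).mpr (hZ'C.trans hCsup.le)
  have hZX₁ : ¬ Z.1 ≤ X₁.1 :=
    mt (hZ.le_iff hl0 hV hW h₁ (le_sup_left.trans hY)).mp hZ'X₁'
  have hsup : X₁.1 ⊔ X₂ = X₁.1 ⊔ Z.1 :=
    ((hcov.wcovBy.eq_or_eq le_sup_left (sup_le le_sup_left hZsup)).resolve_left
      (mt sup_eq_left.mp hZX₁)).symm
  have hsup' : X₁'.1 ⊔ X₂' ≤ X₁'.1 ⊔ Z' :=
    (h₁.sup h₂).mono hl0 hW (h₁.sup hZ) (hsup ▸ hY) hsup.le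
  exact hCsup.not_ge (hsup'.trans (sup_le hlt.le hZ'C))

theorem InducesOnGr.adjacent (hk : InducesOnGr h k) (hk0 : 0 < k) (hkl : k < l)
    (hV : l < Module.rank K V) (hW : l < Module.rank L W) {X₁ X₂ : Gr K V k} {X₁' X₂' : Gr L W k}
    (h₁ : Corresponds h X₁.1 X₁'.1) (h₂ : Corresponds h X₂.1 X₂'.1) (hadj : Adjacent X₁.1 X₂.1) :
    Adjacent X₁'.1 X₂'.1 :=
  ⟨hk.covBy_sup hk0 hkl hV hW h₁ h₂ hadj.1,
    sup_comm X₂'.1 X₁'.1 ▸ hk.covBy_sup hk0 hkl hV hW h₂ h₁ hadj.symm.1⟩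

-- If `Y` is not contained in `X₁ ⊔ X₂`, a vector of `Y` outside `X₁ ⊔ X₂` completes `X₁`, `X₂` to
-- three pairwise adjacent subspaces through `X₁ ⊓ X₂`, the third of them inside `Y`.
theorem InducesOnGr.inf_le (hk : InducesOnGr h (k + 1)) (hkl : k + 1 < l)
    (hV : l < Module.rank K V) (hW : l < Module.rank L W) {X₁ X₂ : Gr K V (k + 1)}
    {X₁' X₂' : Gr L W (k + 1)} (h₁ : Corresponds h X₁.1 X₁'.1) (h₂ : Corresponds h X₂.1 X₂'.1)
    (hadj : Adjacent X₁.1 X₂.1) {Y : Gr K V l} (hY : X₁.1 ⊓ X₂.1 ≤ Y.1) :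
    X₁'.1 ⊓ X₂'.1 ≤ (h Y).1 := by
  have hl0 : 0 < l := by lia
  have := X₁.finiteDimensional k.succ_pos
  by_cases hYsup : Y.1 ≤ X₁.1 ⊔ X₂.1
  · have hsup : finrank K ↥(X₁.1 ⊔ X₂.1) ≤ finrank K Y.1 := by
      rwa [finrank_eq_succ_of_covBy hadj.1, X₁.2, Y.2]
    have := X₂.finiteDimensional k.succ_pos
    exact inf_le_left.trans <| (h₁ Y).mp <|
      le_sup_left.trans_eq (eq_of_le_of_finrank_le hYsup hsup).symm
  obtain ⟨y, hyY, hysup⟩ := SetLike.not_le_iff_exists.mp hYsup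
  have hcov : X₁.1 ⊓ X₂.1 ⋖ X₁.1 ⊓ X₂.1 ⊔ K ∙ y :=
    covBy_sup_span_singleton fun hy => hysup (mem_sup_left (mem_inf.mp hy).1)
  have hinf := finrank_eq_succ_of_covBy hadj.inf_covBy_left
  let X : Gr K V (k + 1) :=
    ⟨X₁.1 ⊓ X₂.1 ⊔ K ∙ y, (finrank_eq_succ_of_covBy hcov).trans (hinf.symm.trans X₁.2)⟩
  have hyX : y ∈ X.1 := mem_sup_right (mem_span_singleton_self y)
  obtain ⟨X', hX⟩ := hk.1 X
  have hadj₁ : Adjacent X₁.1 X.1 := adjacent_of_covBy_of_covBy hadj.inf_covBy_left hcov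
    fun heq => hysup (mem_sup_left (heq ▸ hyX))
  have hadj₂ : Adjacent X₂.1 X.1 := adjacent_of_covBy_of_covBy
    (inf_comm X₁.1 X₂.1 ▸ hadj.symm.inf_covBy_left) hcov
    fun heq => hysup (mem_sup_right (heq ▸ hyX))
  obtain ⟨Y', hY'⟩ := Gr.exists_le_of_covBy k.succ_pos hkl hV.le hadj.1
  have hX' : ¬ X'.1 ≤ X₁'.1 ⊔ X₂'.1 := fun hle =>
    hysup ((hX.le_iff hl0 hV hW (h₁.sup h₂) hY').mpr hle hyX)
  have hadj' := hk.adjacent k.succ_pos hkl hV hW h₁ h₂ hadj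
  have hadj₁' := hk.adjacent k.succ_pos hkl hV hW h₁ hX hadj₁
  have hadj₂' := hk.adjacent k.succ_pos hkl hV hW h₂ hX hadj₂
  have hle : X₁'.1 ⊓ X₂'.1 ≤ X'.1 := hadj'.inf_le_of_not_le_sup hadj₁' hadj₂' hX'
  exact hle.trans ((hX Y).mp (sup_le hY (by simpa using hyY)))

theorem InducesOnGr.exists_corresponds_of_succ (hk : InducesOnGr h (k + 1)) (hk0 : 0 < k)
    (hkl : k + 1 < l) (hV : l < Module.rank K V) (hW : l < Module.rank L W) (Z : Gr K V k) :
    ∃ Z' : Gr L W k, Corresponds h Z.1 Z'.1 := by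
  have := Z.finiteDimensional hk0
  have exists_notMem {X : Submodule K V} [FiniteDimensional K X] (hX : finrank K X < l) :
      ∃ x, x ∉ X := exists_notMem_of_finrank_lt_rank ((Nat.cast_lt.mpr hX).trans hV)
  have cov {x : V} (hx : x ∉ Z.1) : Z.1 ⋖ Z.1 ⊔ K ∙ x := covBy_sup_span_singleton hx
  have finrank_sup {x : V} (hx : x ∉ Z.1) : finrank K ↥(Z.1 ⊔ K ∙ x) = k + 1 := by
    rw [finrank_eq_succ_of_covBy (cov hx), Z.2]
  obtain ⟨x₁, hx₁⟩ := exists_notMem (X := Z.1) (by lia)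
  obtain ⟨x₂, hx₂⟩ := exists_notMem ((finrank_sup hx₁).trans_lt hkl)
  have hx₂Z : x₂ ∉ Z.1 := fun hx => hx₂ (mem_sup_left hx)
  have hne : Z.1 ⊔ K ∙ x₁ ≠ Z.1 ⊔ K ∙ x₂ := fun heq =>
    hx₂ (heq ▸ mem_sup_right (mem_span_singleton_self x₂))
  have hadj := adjacent_of_covBy_of_covBy (cov hx₁) (cov hx₂Z) hne
  have hinf : (Z.1 ⊔ K ∙ x₁) ⊓ (Z.1 ⊔ K ∙ x₂) = Z.1 :=
    (cov hx₁).wcovBy.inf_eq (cov hx₂Z).wcovBy hne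
  obtain ⟨X₁', h₁⟩ := hk.1 ⟨_, finrank_sup hx₁⟩
  obtain ⟨X₂', h₂⟩ := hk.1 ⟨_, finrank_sup hx₂Z⟩
  have hadj' := hk.adjacent k.succ_pos hkl hV hW h₁ h₂ hadj
  have := X₁'.finiteDimensional k.succ_pos
  have hinf' := finrank_eq_succ_of_covBy hadj'.inf_covBy_left
  refine ⟨⟨X₁'.1 ⊓ X₂'.1, by lia⟩, fun Y => ⟨fun hY => ?_, fun hY => ?_⟩⟩
  · exact hk.inf_le hkl hV hW h₁ h₂ hadj (hinf.trans_le hY)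
  · simpa [hinf] using hk.symm.inf_le hkl hW hV h₁.symm h₂.symm hadj' hY

theorem InducesOnGr.one (hk0 : 0 < k) (hkl : k < l) (hV : l < Module.rank K V)
    (hW : l < Module.rank L W) (hk : InducesOnGr h k) : InducesOnGr h 1 := by
  induction k, hk0 using Nat.le_induction with
  | base => exact hk
  | succ k hk0 ih =>
    refine ih (by lia) ⟨hk.exists_corresponds_of_succ hk0 hkl hV hW, fun Z' => ?_⟩
    exact (hk.symm.exists_corresponds_of_succ hk0 hkl hW hV Z').imp fun _ => .symm

end Grassmannian

section SemilinearExtension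

variable {K L U W : Type*} [DivisionRing L] [AddCommGroup W] [Module L W]

theorem exists_ringHom_map_smul_eq [Semiring K] [AddCommMonoid U] [Module K U] (T : U →+ W)
    (hT : ∀ (a : K) x, T (a • x) ∈ L ∙ T x) (hne : ∀ x, ∃ y, T y ∉ L ∙ T x) :
    ∃ σ : K →+* L, ∀ a x, T (a • x) = σ a • T x := by
  obtain ⟨x₀, hx₀⟩ : ∃ x₀, T x₀ ≠ 0 := (hne 0).imp fun x hx h0 => hx (by simp [h0])
  obtain ⟨y, hy⟩ := hne x₀
  choose σ hσ using fun a => mem_span_singleton.mp (hT a x₀)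
  have map_smul_of_notMem (a : K) {z : U} (hz : T z ∉ L ∙ T x₀) : T (a • z) = σ a • T z := by
    obtain ⟨s, hs⟩ := mem_span_singleton.mp (hT a z)
    obtain ⟨t, ht⟩ := mem_span_singleton.mp (hT a (x₀ + z))
    have hst : (s - t) • T z = (t - σ a) • T x₀ := by
      rw [smul_add, map_add, map_add, ← hσ, ← hs, smul_add] at ht
      rw [sub_smul, sub_smul, sub_eq_sub_iff_add_eq_add, add_comm, ← ht, add_comm]
    have hs' : s = t := by
      by_contra hne
      refine hz ((smul_mem_iff _ (sub_ne_zero.mpr hne)).mp (hst ▸ ?_))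
      exact smul_mem _ _ (mem_span_singleton_self _)
    have ht' : t = σ a := by
      rw [hs', sub_self, zero_smul, eq_comm, smul_eq_zero_iff_left hx₀] at hst
      exact sub_eq_zero.mp hst
    rw [← hs, hs', ht']
  have map_smul (a : K) (x : U) : T (a • x) = σ a • T x := by
    by_cases hx : T x ∈ L ∙ T x₀
    · have hxy : T (x + y) ∉ L ∙ T x₀ := by rwa [map_add, Submodule.add_mem_iff_right _ hx]
      have hadd := map_smul_of_notMem a hxy
      rwa [smul_add, map_add, map_add, smul_add, map_smul_of_notMem a hy, add_left_inj] at hadd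
    · exact map_smul_of_notMem a hx
  have hinj : Injective fun s : L => s • T x₀ := smul_left_injective L hx₀
  refine ⟨⟨⟨⟨σ, hinj ?_⟩, fun a b => hinj ?_⟩, hinj ?_, fun a b => hinj ?_⟩, map_smul⟩
  · simp [hσ]
  · simp [hσ, mul_smul, map_smul a]
  · simp [hσ]
  · simp [hσ, add_smul]

theorem mem_span_singleton_add_of_mem {Q : Submodule L W} {x y q : W} (hx : x ∉ Q)
    (hxy : x + y ∈ Q) (hq : q ∈ span L {x, y}) (hqQ : q ∈ Q) : q ∈ L ∙ (x + y) := by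
  obtain ⟨a, b, rfl⟩ := mem_span_pair.mp hq
  have hab : (a - b) • x ∈ Q := by
    simpa [sub_smul, smul_add] using sub_mem hqQ (Q.smul_mem b hxy)
  have : a = b := by_contra fun hne => hx ((smul_mem_iff Q (sub_ne_zero.mpr hne)).mp hab)
  exact mem_span_singleton.mpr ⟨b, by rw [this, smul_add]⟩

end SemilinearExtension

section Collineation

variable {K L V W : Type*} [DivisionRing K] [AddCommGroup V] [Module K V] [DivisionRing L]
  [AddCommGroup W] [Module L W] {φ ψ : V → W} {f : V →ₗ[K] K} {e u v : V}

/-- A collineation between the projective spaces of `V` and `W`: a bijection between their points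
which preserves and reflects collinearity. It is encoded by a function `φ` on vectors, where `φ x`
represents the image of the point `K ∙ x`; the value at `0`, which represents no point, is `0`. -/
structure IsCollineation (K L : Type*) {V W : Type*} [DivisionRing K] [AddCommGroup V]
    [Module K V] [DivisionRing L] [AddCommGroup W] [Module L W] (φ : V → W) : Prop where
  map_zero : φ 0 = 0
  mem_span_pair_iff : ∀ x y z, φ x ∈ span L {φ y, φ z} ↔ x ∈ span K {y, z}
  exists_mem_span : ∀ w, ∃ v, w ∈ L ∙ φ v

namespace IsCollineation

theorem mem_span_singleton_iff (hφ : IsCollineation K L φ) (x y : V) :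
    φ x ∈ L ∙ φ y ↔ x ∈ K ∙ y := by
  simpa using hφ.mem_span_pair_iff x y y

theorem map_eq_zero_iff (hφ : IsCollineation K L φ) (x : V) : φ x = 0 ↔ x = 0 := by
  simpa [hφ.map_zero] using hφ.mem_span_singleton_iff x 0

theorem congr (hφ : IsCollineation K L φ) (hψ : ∀ x, L ∙ ψ x = L ∙ φ x) :
    IsCollineation K L ψ where
  map_zero := by simpa [hφ.map_zero] using hψ 0
  mem_span_pair_iff x y z := by
    rw [← hφ.mem_span_pair_iff, ← span_singleton_le_iff_mem, ← span_singleton_le_iff_mem,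
      span_insert, span_insert, hψ, hψ, hψ]
  exists_mem_span w := by simpa only [hψ] using hφ.exists_mem_span w

theorem span_map_smul (hφ : IsCollineation K L φ) {a : K} (ha : a ≠ 0) (x : V) :
    L ∙ φ (a • x) = L ∙ φ x := by
  apply le_antisymm <;> rw [span_singleton_le_iff_mem, hφ.mem_span_singleton_iff]
  · exact smul_mem _ _ (mem_span_singleton_self x)
  · exact (smul_mem_iff _ ha).mp (mem_span_singleton_self _)

theorem exists_smul_map_add_eq (hφ : IsCollineation K L φ) (he : f e = 1) (hu : f u = 0) :
    ∃ b c : L, b ≠ 0 ∧ c ≠ 0 ∧ c • φ (e + u) = φ e + b • φ u := by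
  rcases eq_or_ne u 0 with rfl | hu0
  · exact ⟨1, 1, by simp [hφ.map_zero]⟩
  have hmem : e + u ∈ span K {e, u} :=
    add_mem (subset_span (by simp)) (subset_span (by simp))
  obtain ⟨a, b, hab⟩ := mem_span_pair.mp ((hφ.mem_span_pair_iff _ _ _).mpr hmem)
  have ha : a ≠ 0 := by
    rintro rfl
    obtain ⟨t, ht⟩ : ∃ t : K, t • u = e + u := mem_span_singleton.mp <|
      (hφ.mem_span_singleton_iff _ _).mp (mem_span_singleton.mpr ⟨b, by simpa using hab⟩)
    simpa [he, hu] using congr(f $ht)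
  have hb : b ≠ 0 := by
    rintro rfl
    obtain ⟨t, ht⟩ : ∃ t : K, t • e = e + u := mem_span_singleton.mp <|
      (hφ.mem_span_singleton_iff _ _).mp (mem_span_singleton.mpr ⟨a, by simpa using hab⟩)
    obtain rfl : t = 1 := by simpa [he, hu] using congr(f $ht)
    exact hu0 (by simpa using ht)
  exact ⟨a⁻¹ * b, a⁻¹, by simp [ha, hb], by simp [ha], by simp [← hab, mul_smul, ha]⟩

theorem exists_normalized (hφ : IsCollineation K L φ) (he : f e = 1) :
    ∃ ψ : V → W, (∀ x, L ∙ ψ x = L ∙ φ x) ∧ ∀ u, f u = 0 → ψ (e + u) = ψ e + ψ u := by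
  classical
  have hex (u : V) : ∃ b c : L, b ≠ 0 ∧ c ≠ 0 ∧ (f u = 0 → c • φ (e + u) = φ e + b • φ u) := by
    by_cases hu : f u = 0
    · simpa [hu] using hφ.exists_smul_map_add_eq he hu
    · exact ⟨1, 1, by simp [hu]⟩
  choose b c hb hc hbc using hex
  have hψe : c 0 • φ e = φ e := by simpa [hφ.map_zero] using hbc 0 f.map_zero
  refine ⟨fun x => (if f x = 0 then b x else c (x - e)) • φ x, fun x => ?_, fun u hu => ?_⟩
  · exact span_singleton_smul_eq (IsUnit.mk0 _ (by split_ifs <;> simp [hb, hc])) _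
  · simp [he, hu, hψe, hbc u hu]

theorem map_add_of_notMem (hφ : IsCollineation K L φ) (he : f e = 1)
    (hadd : ∀ u, f u = 0 → φ (e + u) = φ e + φ u) (hu : f u = 0) (hv : f v = 0)
    (huv : v ∉ K ∙ u) : φ (u + v) = φ u + φ v := by
  have hvQ : φ v ∉ span L {φ u, φ (e + v)} := fun h => by
    obtain ⟨a, b, hab⟩ := mem_span_pair.mp ((hφ.mem_span_pair_iff _ _ _).mp h)
    have hb : b = 0 := by simpa [he, hu, hv] using congr(f $hab)
    exact huv (mem_span_singleton.mpr ⟨a, by simpa [hb] using hab⟩)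
  have heuv : f (u + v) = 0 := by rw [map_add, hu, hv, add_zero]
  -- The image of `e + (u + v)` is the intersection of the lines joining the image of `v` to that
  -- of `e + u` and the image of `u` to that of `e + v`.
  have hmem : φ (e + (u + v)) ∈ L ∙ (φ v + φ (e + u)) := by
    refine mem_span_singleton_add_of_mem hvQ ?_ ?_ ?_
    · rw [hadd u hu, hadd v hv]
      exact mem_span_pair.mpr ⟨1, 1, by simp; abel⟩
    · exact (hφ.mem_span_pair_iff _ _ _).mpr (mem_span_pair.mpr ⟨1, 1, by simp; abel⟩)
    · exact (hφ.mem_span_pair_iff _ _ _).mpr (mem_span_pair.mpr ⟨1, 1, by simp; abel⟩)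
  obtain ⟨c, hc⟩ := mem_span_singleton.mp hmem
  rw [hadd u hu, hadd _ heuv] at hc
  have hφuv : φ (u + v) ∈ span L {φ u, φ v} :=
    (hφ.mem_span_pair_iff _ _ _).mpr (mem_span_pair.mpr ⟨1, 1, by simp⟩)
  have hsum : (c - 1) • φ e = φ (u + v) - c • (φ u + φ v) := by
    rw [sub_smul, one_smul, sub_eq_sub_iff_add_eq_add, ← smul_add, ← add_assoc,
      add_comm (φ (u + v)), ← hc]
    congr 1
    abel
  have hc1 : c = 1 := by
    by_contra hne
    have hφe : φ e ∈ span L {φ u, φ v} := by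
      rw [← smul_mem_iff _ (sub_ne_zero.mpr hne), hsum]
      exact sub_mem hφuv (smul_mem _ _ (mem_span_pair.mpr ⟨1, 1, by simp⟩))
    obtain ⟨a, b, hab⟩ := mem_span_pair.mp ((hφ.mem_span_pair_iff _ _ _).mp hφe)
    simpa [he, hu, hv] using congr(f $hab)
  rw [hc1, sub_self, zero_smul, one_smul] at hsum
  exact sub_eq_zero.mp hsum.symm

-- If `v` lies on the line of `u`, insert a vector off that line and use associativity.
theorem map_add_of_map_eq_zero (hφ : IsCollineation K L φ) (he : f e = 1)
    (hadd : ∀ u, f u = 0 → φ (e + u) = φ e + φ u)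
    (hker : ∀ u, ∃ w, f w = 0 ∧ w ∉ K ∙ u) (hu : f u = 0) (hv : f v = 0) :
    φ (u + v) = φ u + φ v := by
  by_cases huv : v ∈ K ∙ u
  · obtain ⟨w, hw, hwu⟩ := hker u
    have add_w {x : V} (hx : x ∈ K ∙ u) (hfx : f x = 0) : φ (x + w) = φ x + φ w :=
      hφ.map_add_of_notMem he hadd hfx hw fun h =>
        hwu ((span_singleton_le_iff_mem x _).mpr hx h)
    have hvw : v + w ∉ K ∙ u := by rwa [Submodule.add_mem_iff_right _ huv]
    have hfvw : f (v + w) = 0 := by simp [hv, hw]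
    have hassoc : φ (u + v) + φ w = φ u + φ v + φ w := by
      rw [← add_w (add_mem (mem_span_singleton_self u) huv) (by simp [hu, hv]), add_assoc,
        hφ.map_add_of_notMem he hadd hu hfvw hvw, add_w huv hv, add_assoc]
    exact add_right_cancel hassoc
  · exact hφ.map_add_of_notMem he hadd hu hv huv

theorem exists_ringHom_of_normalized (hφ : IsCollineation K L φ) (he : f e = 1)
    (hadd : ∀ u, f u = 0 → φ (e + u) = φ e + φ u)
    (hker : ∀ u, ∃ w, f w = 0 ∧ w ∉ K ∙ u) :
    ∃ (σ : K →+* L) (S : V →ₛₗ[σ] W), ∀ x, L ∙ S x = L ∙ φ x := by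
  let T : f.ker →+ W := AddMonoidHom.mk' (fun u => φ u) fun u v =>
    hφ.map_add_of_map_eq_zero he hadd hker u.2 v.2
  obtain ⟨σ, hσ⟩ : ∃ σ : K →+* L, ∀ a u, T (a • u) = σ a • T u :=
    exists_ringHom_map_smul_eq T
      (fun a u => (hφ.mem_span_singleton_iff _ _).mpr (smul_mem _ a (mem_span_singleton_self _)))
      fun u => (hker u).elim fun w hw => ⟨⟨w, hw.1⟩, mt (hφ.mem_span_singleton_iff _ _).mp hw.2⟩
  let π : V →ₗ[K] f.ker := (LinearMap.id - f.smulRight e).codRestrict f.ker fun x => by simp [he]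
  have hπ (x : V) : (π x : V) = x - f x • e := rfl
  let S : V →ₛₗ[σ] W :=
    { toFun := fun x => σ (f x) • φ e + T (π x)
      map_add' := fun x y => by simp only [map_add, add_smul]; abel
      map_smul' := fun a x => by simp [hσ, mul_smul] }
  have hS_one {x : V} (hx : f x = 1) : S x = φ x := by
    have hadd' := hadd (π x) (π x).2
    simpa [S, T, hπ, hx] using hadd'.symm
  refine ⟨σ, S, fun x => ?_⟩
  by_cases hx : f x = 0
  · simp [S, T, hπ, hx]
  · have hfx : f ((f x)⁻¹ • x) = 1 := by simp [hx]
    rw [← hφ.span_map_smul (inv_ne_zero hx) x, ← hS_one hfx, map_smulₛₗ,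
      span_singleton_smul_eq (by simpa using hx)]

theorem surjective_of_semilinear {σ : K →+* L} {S : V →ₛₗ[σ] W} (hS : IsCollineation K L S)
    (hV : 1 < Module.rank K V) : Surjective σ := fun t => by
  obtain ⟨x, hx⟩ := rank_pos_iff_exists_ne_zero.mp (zero_lt_one.trans hV)
  obtain ⟨y, hxy⟩ := exists_linearIndependent_pair_of_one_lt_rank hV hx
  have hxyS : LinearIndependent L ![S x, S y] := by
    refine (LinearIndependent.pair_iff' (mt (hS.map_eq_zero_iff x).mp hx)).mpr fun a ha => ?_
    obtain ⟨b, hb⟩ := mem_span_singleton.mp <|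
      (hS.mem_span_singleton_iff y x).mp (mem_span_singleton.mpr ⟨a, ha⟩)
    exact (LinearIndependent.pair_iff' hx).mp hxy b hb
  obtain ⟨v, hv⟩ := hS.exists_mem_span (S x + t • S y)
  obtain ⟨c, hc⟩ := mem_span_singleton.mp hv
  have hc0 : c ≠ 0 := by
    rintro rfl
    exact one_ne_zero (hxyS.eq_of_pair (s := 1) (t := t) (s' := 0) (t' := 0) (by simp [← hc])).1
  obtain ⟨a, b, rfl⟩ : ∃ a b : K, a • x + b • y = v := by
    rw [← mem_span_pair, ← hS.mem_span_pair_iff, ← smul_mem_iff _ hc0, hc]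
    exact mem_span_pair.mpr ⟨1, t, by simp⟩
  obtain ⟨ha, hb⟩ : 1 = c * σ a ∧ t = c * σ b :=
    hxyS.eq_of_pair (by simp [← hc, mul_smul])
  refine ⟨a⁻¹ * b, ?_⟩
  rw [map_mul, map_inv₀, hb, eq_inv_of_mul_eq_one_left ha.symm]

theorem bijective_of_semilinear {σ : K →+* L} (hσ : Surjective σ) {S : V →ₛₗ[σ] W}
    (hS : IsCollineation K L S) : Bijective S := by
  refine ⟨(injective_iff_map_eq_zero S).mpr fun x => (hS.map_eq_zero_iff x).mp, fun w => ?_⟩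
  obtain ⟨v, hv⟩ := hS.exists_mem_span w
  obtain ⟨c, rfl⟩ := mem_span_singleton.mp hv
  obtain ⟨a, rfl⟩ := hσ c
  exact ⟨a • v, map_smulₛₗ S a v⟩

theorem exists_semilinear (hφ : IsCollineation K L φ) (hV : 2 < Module.rank K V) :
    ∃ (σ : K ≃+* L) (S : V →ₛₗ[(σ : K →+* L)] W), Bijective S ∧ ∀ x, L ∙ S x = L ∙ φ x := by
  obtain ⟨e, he0⟩ := rank_pos_iff_exists_ne_zero.mp (zero_lt_two.trans hV)
  obtain ⟨f, -, he⟩ :=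
    LinearMap.exists_extend_of_notMem (0 : (⊥ : Submodule K V) →ₗ[K] K) (by simpa using he0) 1
  have hker (u : V) : ∃ w, f w = 0 ∧ w ∉ K ∙ u := by
    obtain ⟨v, hv⟩ := exists_notMem_span_pair hV e u
    refine ⟨v - f v • e, by simp [he], fun h => hv ?_⟩
    rw [span_insert]
    simpa using add_mem_sup (smul_mem _ (f v) (mem_span_singleton_self e)) h
  obtain ⟨ψ, hψφ, hadd⟩ := hφ.exists_normalized he
  obtain ⟨σ, S, hS⟩ := (hφ.congr hψφ).exists_ringHom_of_normalized he hadd hker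
  have hSφ (x : V) : L ∙ S x = L ∙ φ x := (hS x).trans (hψφ x)
  have hSc : IsCollineation K L S := hφ.congr hSφ
  have hσ : Surjective σ := hSc.surjective_of_semilinear (Cardinal.one_lt_two.trans hV)
  obtain ⟨τ, rfl⟩ : ∃ τ : K ≃+* L, (τ : K →+* L) = σ :=
    ⟨.ofBijective σ ⟨σ.injective, hσ⟩, rfl⟩
  exact ⟨τ, S, hSc.bijective_of_semilinear hσ, hSφ⟩

end IsCollineation

end Collineation

section SemilinearRealization

variable {K L V W : Type*} [DivisionRing K] [AddCommGroup V] [Module K V] [DivisionRing L]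
  [AddCommGroup W] [Module L W] {l : ℕ} {h : Gr K V l ≃ Gr L W l}

theorem InducesOnGr.exists_corresponds_span_singleton (h₁ : InducesOnGr h 1) (x : V) :
    ∃ x', (x = 0 → x' = 0) ∧ Corresponds h (K ∙ x) (L ∙ x') := by
  rcases eq_or_ne x 0 with rfl | hx
  · exact ⟨0, fun _ => rfl, fun Y => by simp⟩
  · obtain ⟨X', hX'⟩ := h₁.1 ⟨K ∙ x, finrank_span_singleton hx⟩
    obtain ⟨x', hx'⟩ := X'.exists_eq_span_singleton
    exact ⟨x', fun h0 => (hx h0).elim, hx' ▸ hX'⟩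

theorem InducesOnGr.exists_isCollineation (h₁ : InducesOnGr h 1) (hl : 2 ≤ l)
    (hV : l < Module.rank K V) (hW : l < Module.rank L W) :
    ∃ φ : V → W, IsCollineation K L φ ∧ ∀ x, Corresponds h (K ∙ x) (L ∙ φ x) := by
  have hl0 : 0 < l := two_pos.trans_le hl
  choose φ hφ0 hφ using h₁.exists_corresponds_span_singleton
  have exists_le (y z : V) : ∃ Y : Gr K V l, span K {y, z} ≤ Y.1 := by
    have : FiniteDimensional K (span K {y, z}) := .span_of_finite K (Set.toFinite _)
    have hyz : finrank K (span K {y, z}) ≤ l :=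
      (finrank_le_of_rank_le (rank_span_pair_le y z)).trans hl
    obtain ⟨Y, hY, -, hYl⟩ := exists_le_finrank_eq hyz hV.le
    exact ⟨⟨Y, hYl⟩, hY⟩
  refine ⟨φ, ⟨hφ0 0 rfl, fun x y z => ?_, fun w => ?_⟩, hφ⟩
  · obtain ⟨Y, hY⟩ := exists_le y z
    rw [span_insert] at hY
    rw [← span_singleton_le_iff_mem, ← span_singleton_le_iff_mem, span_insert, span_insert,
      (hφ x).le_iff hl0 hV hW ((hφ y).sup (hφ z)) hY]
  · obtain ⟨v, -, hv⟩ := h₁.symm.exists_corresponds_span_singleton w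
    obtain ⟨Y, hY⟩ := exists_le v v
    refine ⟨v, (span_singleton_le_iff_mem _ _).mp ?_⟩
    exact hv.symm.mono hl0 hW (hφ v) (by simpa using hY) le_rfl

theorem Corresponds.eq_map {σ : K ≃+* L} {S : V →ₛₗ[(σ : K →+* L)] W} (hS : Bijective S)
    (hSh : ∀ x, Corresponds h (K ∙ x) (L ∙ S x)) (hl0 : 0 < l) (hV : l < Module.rank K V)
    (hW : l < Module.rank L W) {X : Submodule K V} {X' : Submodule L W} (hX : Corresponds h X X')
    {Y : Gr K V l} (hY : X ≤ Y.1) : X' = X.map S := by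
  ext w
  obtain ⟨x, rfl⟩ := hS.2 w
  rw [← span_singleton_le_iff_mem, ← (hSh x).le_iff hl0 hV hW hX hY, span_singleton_le_iff_mem,
    ← SetLike.mem_coe (p := X.map S), map_coe, hS.1.mem_set_image, SetLike.mem_coe]

end SemilinearRealization

theorem stmt_13_general {K L V W : Type*} [DivisionRing K] [AddCommGroup V] [Module K V]
    [DivisionRing L] [AddCommGroup W] [Module L W] (m l : ℕ) (hm : 0 < m) (hml : m < l)
    (hV : l < Module.rank K V) (hW : l < Module.rank L W) (g : Gr K V m ≃ Gr L W m)
    (h : Gr K V l ≃ Gr L W l) (hgh : ∀ X Y, X.1 ≤ Y.1 ↔ (g X).1 ≤ (h Y).1) :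
    ∃ (σ : K ≃+* L) (S : V →ₛₗ[(σ : K →+* L)] W), Bijective S ∧
      (∀ X, (g X).1 = X.1.map S) ∧ ∀ Y, (h Y).1 = Y.1.map S := by
  have hl0 : 0 < l := hm.trans hml
  have hl2 : 2 ≤ l := by lia
  have hm_induces : InducesOnGr h m :=
    ⟨fun X => ⟨g X, hgh X⟩, fun X' => ⟨g.symm X', fun Y => by simpa using hgh (g.symm X') Y⟩⟩
  obtain ⟨φ, hφ, hφh⟩ := (hm_induces.one hm hml hV hW).exists_isCollineation hl2 hV hW
  obtain ⟨σ, S, hS, hSφ⟩ := hφ.exists_semilinear ((Nat.cast_le.mpr hl2).trans_lt hV)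
  have hSh (x : V) : Corresponds h (K ∙ x) (L ∙ S x) := hSφ x ▸ hφh x
  refine ⟨σ, S, hS, fun X => ?_, fun Y => ?_⟩
  · have := X.finiteDimensional hm
    obtain ⟨Y, hXY, -, hY⟩ := exists_le_finrank_eq (X.2.trans_le hml.le) hV.le
    exact Corresponds.eq_map hS hSh hl0 hV hW (hgh X) (Y := ⟨Y, hY⟩) hXY
  · exact Corresponds.eq_map hS hSh hl0 hV hW (corresponds_apply hl0 h Y) le_rfl

/-- (Proposition on pairs of Grassmannians.) Let `V` be a finite-dimensional complex
vector space, `0 < m < l < dim V`, and let `g`, `h` be bijections of the Grassmannians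
of `m`- and `l`-dimensional subspaces such that `X ⊆ Y ↔ g X ⊆ h Y`. Then `g` and `h`
are induced by one and the same semilinear automorphism `S` of `V`. -/
theorem stmt_13 {V : Type*} [AddCommGroup V] [Module ℂ V] [FiniteDimensional ℂ V]
    (m l : ℕ) (hm : 0 < m) (hml : m < l) (hl : l < Module.finrank ℂ V)
    (g : {X : Submodule ℂ V // Module.finrank ℂ X = m} ≃
         {X : Submodule ℂ V // Module.finrank ℂ X = m})
    (h : {Y : Submodule ℂ V // Module.finrank ℂ Y = l} ≃
         {Y : Submodule ℂ V // Module.finrank ℂ Y = l})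
    (hgh : ∀ (X : {X : Submodule ℂ V // Module.finrank ℂ X = m})
             (Y : {Y : Submodule ℂ V // Module.finrank ℂ Y = l}),
        X.val ≤ Y.val ↔ (g X).val ≤ (h Y).val) :
    ∃ (α : ℂ ≃+* ℂ) (S : V → V), Function.Bijective S ∧
      (∀ x y : V, S (x + y) = S x + S y) ∧
      (∀ (a : ℂ) (x : V), S (a • x) = α a • S x) ∧
      (∀ X : {X : Submodule ℂ V // Module.finrank ℂ X = m},
        ((g X).val : Set V) = S '' (X.val : Set V)) ∧
      (∀ Y : {Y : Submodule ℂ V // Module.finrank ℂ Y = l},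
        ((h Y).val : Set V) = S '' (Y.val : Set V)) := by
  have hV := Module.lt_rank_of_lt_finrank hl
  obtain ⟨σ, S, hS, hg, hh⟩ := stmt_13_general m l hm hml hV hV g h hgh
  exact ⟨σ, S, hS, map_add S, map_smulₛₗ S, fun X => congr(($(hg X) : Set V)),
    fun Y => congr(($(hh Y) : Set V))⟩
end

section
/- Let V be a finite-dimensional complex inner product space, X₁, X₂, X₃ pairwise orthogonal subspaces with dim Xᵢ = nᵢ ≥ 1. Then there exist subspaces Y₁, Y₂, Y₃ of V with dim Yᵢ = nᵢ, pairwise orthogonal, with Y₁ + Y₂ + Y₃ = X₁ + X₂ + X₃, such that Yᵢ is adjacent to Xᵢ for i = 1, 3, and X₁ is not orthogonal to Y₃. -/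
/-!
Choose a line `L` in `X₁` and a line `M` in `X₃`. Keep `Y₂ = X₂` and swap the two lines between the
outer subspaces: `Y₁ = (X₁ ⊖ L) ⊕ M` and `Y₃ = (X₃ ⊖ M) ⊕ L`. Only the summands of an orthogonal
decomposition have been regrouped, so dimensions, orthogonality and the total sum are preserved.
Moreover `Y₁ ∩ X₁ = X₁ ⊖ L` and `Y₃ ∩ X₃ = X₃ ⊖ M` have codimension one, and `L` lies in both `X₁`
and `Y₃`.
-/

section OrthogonalExchange

open Module Submodule

variable {𝕜 V : Type*} [RCLike 𝕜] [NormedAddCommGroup V] [InnerProductSpace 𝕜 V]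

/-- The exchange of a part `L` of the subspace `X` for a new part `M`, written `(X ⊖ L) ⊕ M` when
`L ≤ X ⟂ M`. It is defined for arbitrary subspaces; the relations among them are left to the
lemmas. -/
def orthogonalExchange (X L M : Submodule 𝕜 V) : Submodule 𝕜 V :=
  Lᗮ ⊓ X ⊔ M

variable {X Y Z L M : Submodule 𝕜 V}

lemma le_orthogonalExchange : M ≤ orthogonalExchange X L M :=
  le_sup_right

lemma orthogonalExchange_inf_self (hMX : Disjoint M X) :
    orthogonalExchange X L M ⊓ X = Lᗮ ⊓ X := by
  rw [orthogonalExchange, sup_inf_assoc_of_le M inf_le_right, hMX.eq_bot, sup_bot_eq]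

lemma finrank_orthogonalExchange_inf_self_add [FiniteDimensional 𝕜 X] (hLX : L ≤ X)
    (hMX : Disjoint M X) :
    finrank 𝕜 ↥(orthogonalExchange X L M ⊓ X) + finrank 𝕜 L = finrank 𝕜 X := by
  rw [orthogonalExchange_inf_self hMX, add_comm, finrank_add_inf_finrank_orthogonal hLX]

lemma finrank_orthogonalExchange_add [FiniteDimensional 𝕜 X] [FiniteDimensional 𝕜 M]
    (hLX : L ≤ X) (hMX : Disjoint M X) :
    finrank 𝕜 (orthogonalExchange X L M) + finrank 𝕜 L = finrank 𝕜 X + finrank 𝕜 M := by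
  have hdisj : Lᗮ ⊓ X ⊓ M = ⊥ := (hMX.symm.mono_left inf_le_right).eq_bot
  have hsup := finrank_sup_add_finrank_inf_eq (Lᗮ ⊓ X) M
  rw [hdisj, finrank_bot, add_zero] at hsup
  rw [orthogonalExchange, hsup, ← finrank_add_inf_finrank_orthogonal hLX]
  ring

lemma isOrtho_orthogonalExchange_left (hXZ : X ⟂ Z) (hMZ : M ⟂ Z) : orthogonalExchange X L M ⟂ Z :=
  isOrtho_sup_left.2 ⟨hXZ.mono_left inf_le_right, hMZ⟩

lemma isOrtho_orthogonalExchange_orthogonalExchange (hXY : X ⟂ Y) (hLX : L ≤ X) (hMY : M ≤ Y) :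
    orthogonalExchange X L M ⟂ orthogonalExchange Y M L := by
  have hL : Lᗮ ⊓ X ⟂ L := (isOrtho_orthogonal_left L).mono_left inf_le_left
  have hM : M ⟂ Mᗮ ⊓ Y := (isOrtho_orthogonal_right M).mono_right inf_le_left
  have hML : M ⟂ L := (hXY.mono hLX hMY).symm
  exact isOrtho_sup_left.2
    ⟨isOrtho_sup_right.2 ⟨hXY.mono inf_le_right inf_le_right, hL⟩, isOrtho_sup_right.2 ⟨hM, hML⟩⟩

lemma orthogonalExchange_sup_orthogonalExchange [L.HasOrthogonalProjection]
    [M.HasOrthogonalProjection] (hLX : L ≤ X) (hMY : M ≤ Y) :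
    orthogonalExchange X L M ⊔ orthogonalExchange Y M L = X ⊔ Y :=
  calc Lᗮ ⊓ X ⊔ M ⊔ (Mᗮ ⊓ Y ⊔ L)
      = (L ⊔ Lᗮ ⊓ X) ⊔ (M ⊔ Mᗮ ⊓ Y) := by ac_rfl
    _ = X ⊔ Y := by
      rw [sup_orthogonal_inf_of_hasOrthogonalProjection hLX,
        sup_orthogonal_inf_of_hasOrthogonalProjection hMY]

theorem stmt_15_general {X₁ X₂ X₃ : Submodule 𝕜 V} [FiniteDimensional 𝕜 X₁]
    [FiniteDimensional 𝕜 X₃] (h₁ : X₁ ≠ ⊥) (h₃ : X₃ ≠ ⊥)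
    (h12 : X₁ ⟂ X₂) (h13 : X₁ ⟂ X₃) (h23 : X₂ ⟂ X₃) :
    ∃ Y₁ Y₃ : Submodule 𝕜 V,
      finrank 𝕜 Y₁ = finrank 𝕜 X₁ ∧ finrank 𝕜 Y₃ = finrank 𝕜 X₃ ∧
      Y₁ ⟂ X₂ ∧ Y₁ ⟂ Y₃ ∧ X₂ ⟂ Y₃ ∧
      Y₁ ⊔ X₂ ⊔ Y₃ = X₁ ⊔ X₂ ⊔ X₃ ∧
      finrank 𝕜 ↥(Y₁ ⊓ X₁) + 1 = finrank 𝕜 X₁ ∧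
      finrank 𝕜 ↥(Y₃ ⊓ X₃) + 1 = finrank 𝕜 X₃ ∧
      ¬ X₁ ⟂ Y₃ := by
  obtain ⟨L, hL, hL₁⟩ := (eq_bot_or_exists_atom_le X₁).resolve_left h₁
  obtain ⟨M, hM, hM₃⟩ := (eq_bot_or_exists_atom_le X₃).resolve_left h₃
  have : FiniteDimensional 𝕜 L := finiteDimensional_of_le hL₁
  have : FiniteDimensional 𝕜 M := finiteDimensional_of_le hM₃
  have hL_finrank : finrank 𝕜 L = 1 := isAtom_iff_finrank_eq_one.1 hL
  have hM_finrank : finrank 𝕜 M = 1 := isAtom_iff_finrank_eq_one.1 hM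
  have hM₁ : Disjoint M X₁ := (h13.mono_right hM₃).symm.disjoint
  have hL₃ : Disjoint L X₃ := (h13.mono_left hL₁).disjoint
  have hdim₁ := finrank_orthogonalExchange_add hL₁ hM₁
  have hdim₃ := finrank_orthogonalExchange_add hM₃ hL₃
  refine ⟨orthogonalExchange X₁ L M, orthogonalExchange X₃ M L, by omega, by omega,
    isOrtho_orthogonalExchange_left h12 (h23.mono_right hM₃).symm,
    isOrtho_orthogonalExchange_orthogonalExchange h13 hL₁ hM₃,
    (isOrtho_orthogonalExchange_left h23.symm (h12.mono_left hL₁)).symm, ?_,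
    hL_finrank ▸ finrank_orthogonalExchange_inf_self_add hL₁ hM₁,
    hM_finrank ▸ finrank_orthogonalExchange_inf_self_add hM₃ hL₃,
    fun h ↦ hL.ne_bot (le_bot_iff.1 (h.disjoint hL₁ le_orthogonalExchange))⟩
  rw [sup_right_comm, orthogonalExchange_sup_orthogonalExchange hL₁ hM₃, sup_right_comm]

end OrthogonalExchange

/-- Given pairwise orthogonal subspaces `X₁, X₂, X₃` of dimensions `n₁, n₂, n₃ ≥ 1` of
a finite-dimensional complex inner product space, there are pairwise orthogonal
subspaces `Y₁, Y₂, Y₃` of the same dimensions with `Y₁ + Y₂ + Y₃ = X₁ + X₂ + X₃`,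
such that `Yᵢ` is adjacent to `Xᵢ` for `i = 1, 3`, and `X₁` is not orthogonal to `Y₃`. -/
theorem stmt_15 {V : Type*} [NormedAddCommGroup V] [InnerProductSpace ℂ V]
    [FiniteDimensional ℂ V]
    (X₁ X₂ X₃ : Submodule ℂ V) (n₁ n₂ n₃ : ℕ)
    (hn₁ : 1 ≤ n₁) (hn₂ : 1 ≤ n₂) (hn₃ : 1 ≤ n₃)
    (hd₁ : Module.finrank ℂ X₁ = n₁) (hd₂ : Module.finrank ℂ X₂ = n₂)
    (hd₃ : Module.finrank ℂ X₃ = n₃)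
    (h12 : Submodule.IsOrtho X₁ X₂) (h13 : Submodule.IsOrtho X₁ X₃)
    (h23 : Submodule.IsOrtho X₂ X₃) :
    ∃ Y₁ Y₂ Y₃ : Submodule ℂ V,
      Module.finrank ℂ Y₁ = n₁ ∧ Module.finrank ℂ Y₂ = n₂ ∧
      Module.finrank ℂ Y₃ = n₃ ∧
      Submodule.IsOrtho Y₁ Y₂ ∧ Submodule.IsOrtho Y₁ Y₃ ∧
      Submodule.IsOrtho Y₂ Y₃ ∧
      Y₁ ⊔ Y₂ ⊔ Y₃ = X₁ ⊔ X₂ ⊔ X₃ ∧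
      Module.finrank ℂ ↥(Y₁ ⊓ X₁) + 1 = n₁ ∧
      Module.finrank ℂ ↥(Y₃ ⊓ X₃) + 1 = n₃ ∧
      ¬ Submodule.IsOrtho X₁ Y₃ := by
  subst hd₁ hd₂ hd₃
  obtain ⟨Y₁, Y₃, hY₁, hY₃, hY⟩ := stmt_15_general
    (Submodule.one_le_finrank_iff.1 hn₁) (Submodule.one_le_finrank_iff.1 hn₃) h12 h13 h23
  exact ⟨Y₁, X₂, Y₃, hY₁, rfl, hY₃, hY⟩
end
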